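/- The set of rational numbers r for which there exist regular integers p and q with 1 < p ≤ 125, 1 < q ≤ 125, r = p/q and 1 < r < 1 + √2 has exactly 47 elements. -/

import Mathlib

/-- A positive integer is regular if it is of the form `2^a · 3^b · 5^c`. -/
def Regular (n : ℕ) : Prop := ∃ a b c : ℕ, n = 2 ^ a * 3 ^ b * 5 ^ c

/-- The regular integers `n` with `1 < n ≤ 125`. -/
def regularsUpTo125 : Finset ℕ :=
  ((Finset.range 7 ×ˢ Finset.range 5 ×ˢ Finset.range 4).image
    fun e => 2 ^ e.1 * 3 ^ e.2.1 * 5 ^ e.2.2).filter fun n => 1 < n ∧ n ≤ 125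

lemma mem_regularsUpTo125 {n : ℕ} :
    n ∈ regularsUpTo125 ↔ Regular n ∧ 1 < n ∧ n ≤ 125 := by
  simp only [regularsUpTo125, Finset.mem_filter, Finset.mem_image, Finset.mem_product,
    Finset.mem_range, Prod.exists]
  refine and_congr_left fun ⟨_, hn⟩ => ⟨?_, ?_⟩
  · rintro ⟨a, b, c, -, rfl⟩
    exact ⟨a, b, c, rfl⟩
  · rintro ⟨a, b, c, rfl⟩
    have exponent_lt {k m e : ℕ} (hk : 1 < k) (hd : k ^ e ∣ 2 ^ a * 3 ^ b * 5 ^ c)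
        (hm : 125 < k ^ m) : e < m :=
      (Nat.pow_lt_pow_iff_right hk).1
        (((Nat.le_of_dvd (by positivity) hd).trans hn).trans_lt hm)
    refine ⟨a, b, c, ⟨exponent_lt (k := 2) (by norm_num) ?_ (by norm_num),
      exponent_lt (k := 3) (by norm_num) ?_ (by norm_num),
      exponent_lt (k := 5) (by norm_num) ?_ (by norm_num)⟩, rfl⟩
    · exact (Dvd.intro _ rfl).mul_right _
    · exact (Dvd.intro_left _ rfl).mul_right _
    · exact Dvd.intro_left _ rfl

/-- The bounds `1 < p / q < 1 + √2` expressed through natural numbers. -/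
lemma one_lt_div_and_div_lt_one_add_sqrt_two_iff {p q : ℕ} (hq : 0 < q) :
    (1 < (p : ℝ) / q ∧ (p : ℝ) / q < 1 + Real.sqrt 2) ↔
      q < p ∧ p ^ 2 < 2 * p * q + q ^ 2 := by
  have hq' : (0 : ℝ) < q := by exact_mod_cast hq
  rw [one_lt_div hq', Nat.cast_lt]
  refine and_congr_right fun hpq => ?_
  have hr : (1 : ℝ) < (p : ℝ) / q := (one_lt_div hq').2 (by exact_mod_cast hpq)
  rw [← sub_lt_iff_lt_add', Real.lt_sqrt (by linarith), div_sub_one hq'.ne', div_pow,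
    div_lt_iff₀ (by positivity), ← Nat.cast_lt (α := ℝ)]
  push_cast
  constructor <;> intro h <;> linarith

/-- The admissible ratios of regular integers in the interval `(1, 125]`. -/
def admissibleRatios : Finset ℚ :=
  ((regularsUpTo125 ×ˢ regularsUpTo125).filter
    fun x => x.2 < x.1 ∧ x.1 ^ 2 < 2 * x.1 * x.2 + x.2 ^ 2).image
    fun x => (x.1 : ℚ) / x.2

lemma card_admissibleRatios : admissibleRatios.card = 47 := by
  decide +kernel

/-- There are exactly 47 admissible ratios `r = p/q` with regular integers
`1 < p ≤ 125` and `1 < q ≤ 125` and `1 < r < 1 + √2` (Procedure 2). -/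
theorem procedure_two_card :
    {r : ℚ | ∃ p q : ℕ, Regular p ∧ Regular q ∧ 1 < p ∧ p ≤ 125 ∧ 1 < q ∧ q ≤ 125 ∧
      r = (p : ℚ) / q ∧ 1 < (r : ℝ) ∧ (r : ℝ) < 1 + Real.sqrt 2}.ncard = 47 := by
  refine Eq.trans ?_ ((Set.ncard_coe_finset _).trans card_admissibleRatios)
  refine congrArg Set.ncard ?_
  ext r
  simp only [admissibleRatios, Set.mem_ofPred_eq, Finset.mem_coe, Finset.mem_image,
    Finset.mem_filter, Finset.mem_product, Prod.exists, mem_regularsUpTo125]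
  refine exists₂_congr fun p q => ⟨?_, ?_⟩
  · rintro ⟨hp, hq, hp1, hp2, hq1, hq2, rfl, hr⟩
    push_cast at hr
    exact ⟨⟨⟨⟨hp, hp1, hp2⟩, hq, hq1, hq2⟩,
      (one_lt_div_and_div_lt_one_add_sqrt_two_iff (by lia)).1 hr⟩, rfl⟩
  · rintro ⟨⟨⟨⟨hp, hp1, hp2⟩, hq, hq1, hq2⟩, hr⟩, rfl⟩
    refine ⟨hp, hq, hp1, hp2, hq1, hq2, rfl, ?_⟩
    push_cast
    exact (one_lt_div_and_div_lt_one_add_sqrt_two_iff (by lia)).2 hr
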